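/- arXiv:2512.07043 — 2 statements merged into one kernel-verified Lean document; each statement's English description precedes it below -/
import Mathlib

section
/- (Optimal horizon / Theorem 1.) Let cs_1, …, cs_N be the controllable sets of the cost-augmented system generated by the backward recursion, and assume each cs_k is compact. Fix an initial condition x_i ∈ ℝⁿ, let K := {k ∈ {1, …, N} : ∃ c ∈ ℝ, (x_i, c) ∈ cs_k}, and assume K is nonempty. For k ∈ K, set c_k := min{c : (x_i, c) ∈ cs_k}, and let J_k be the infimum of the total cost Σ_{j=k}^{N−1} ℓ(s_j) over all feasible (N−k)-step trajectories from x_i, i.e., controls s_k, …, s_{N−1} ∈ Ũ and states x_k = x_i, x_{j+1} = A x_j + B s_j + d with (x_j, Σ_{i=j}^{N−1} ℓ(s_i)) ∈ X̃ for j = k, …, N−1 and x_N ∈ X_f. Then J_k = c_k for every k ∈ K, and hence, with k* := argmin_{k ∈ K} c_k, the globally optimal free-final-time cost min_{k ∈ K} J_k equals c_{k*} and is achieved with horizon length N − k*. -/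
open Pointwise Matrix

/-!
Splitting a feasible trajectory into its first step and the rest shows that the costs of the
feasible trajectories from `x` satisfy the same backward recursion as the slices of the
controllable sets over `x`. So the two sets of costs coincide, and not only their minima.
Compactness makes every slice attain its minimum, and the optimal horizon selects the smallest of
these finitely many minima.
-/

section Trajectories

variable {X U G : Type*} [AddCommMonoid G]

/-- The one-step backward operator on sets of pairs of a state and a cost-to-go: the pairs in `Xt`
that some control in `Ut` drives into `S`. The successor cost-to-go `c` of `p` is characterised by
`p.2 = ℓ u + c` instead of `c = p.2 - ℓ u`, so that costs need not form a group. -/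
def costPredecessor (f : X → U → X) (ℓ : U → G) (Xt : Set (X × G)) (Ut : Set U)
    (S : Set (X × G)) : Set (X × G) :=
  {p | p ∈ Xt ∧ ∃ u ∈ Ut, ∃ c, (f p.1 u, c) ∈ S ∧ p.2 = ℓ u + c}

/-- On the time interval from `k` to `N`, the controls `s` are admissible, the states `xs` follow
the dynamics `f` and, paired with the cost still to be paid, satisfy the constraint `Xt`. Only the
values `s j` for `k ≤ j < N` and `xs j` for `k ≤ j ≤ N` matter. -/
def IsAdmissibleTrajectory (f : X → U → X) (ℓ : U → G) (Xt : Set (X × G)) (Ut : Set U)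
    (k N : ℕ) (s : ℕ → U) (xs : ℕ → X) : Prop :=
  ∀ j, k ≤ j → j < N →
    s j ∈ Ut ∧ xs (j + 1) = f (xs j) (s j) ∧ (xs j, ∑ i ∈ Finset.Ico j N, ℓ (s i)) ∈ Xt

/-- The total costs of the admissible trajectories that start from `x` at time `k` and reach the
terminal set `Xf` at time `N`. -/
def feasibleCosts (f : X → U → X) (ℓ : U → G) (Xt : Set (X × G)) (Ut : Set U) (Xf : Set X)
    (k N : ℕ) (x : X) : Set G :=
  {J | ∃ (s : ℕ → U) (xs : ℕ → X), xs k = x ∧ IsAdmissibleTrajectory f ℓ Xt Ut k N s xs ∧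
    xs N ∈ Xf ∧ J = ∑ i ∈ Finset.Ico k N, ℓ (s i)}

variable {f : X → U → X} {ℓ : U → G} {Xt : Set (X × G)} {Ut : Set U} {Xf : Set X}
  {k N : ℕ} {s : ℕ → U} {xs : ℕ → X} {x : X} {u : U} {J : G}

theorem sum_Ico_update_of_lt {j : ℕ} (hkj : k < j) :
    ∑ i ∈ Finset.Ico j N, ℓ (Function.update s k u i) = ∑ i ∈ Finset.Ico j N, ℓ (s i) :=
  Finset.sum_congr rfl fun i hi => by
    rw [Function.update_of_ne (hkj.trans_le (Finset.mem_Ico.mp hi).1).ne']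

theorem sum_Ico_update_self (hkN : k < N) :
    ∑ i ∈ Finset.Ico k N, ℓ (Function.update s k u i) =
      ℓ u + ∑ i ∈ Finset.Ico (k + 1) N, ℓ (s i) := by
  rw [Finset.sum_eq_sum_Ico_succ_bot hkN, Function.update_self,
    sum_Ico_update_of_lt k.lt_succ_self]

theorem IsAdmissibleTrajectory.tail (h : IsAdmissibleTrajectory f ℓ Xt Ut k N s xs) :
    IsAdmissibleTrajectory f ℓ Xt Ut (k + 1) N s xs :=
  fun j hkj => h j (Nat.le_of_succ_le hkj)

theorem IsAdmissibleTrajectory.update (h : IsAdmissibleTrajectory f ℓ Xt Ut (k + 1) N s xs)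
    (hu : u ∈ Ut) (hxs : xs (k + 1) = f x u)
    (hx : (x, ℓ u + ∑ i ∈ Finset.Ico (k + 1) N, ℓ (s i)) ∈ Xt) :
    IsAdmissibleTrajectory f ℓ Xt Ut k N (Function.update s k u) (Function.update xs k x) := by
  intro j hkj hjN
  rw [Function.update_of_ne (Nat.lt_succ_of_le hkj).ne']
  rcases hkj.eq_or_lt with rfl | hkj
  · rw [Function.update_self, Function.update_self, sum_Ico_update_self hjN]
    exact ⟨hu, hxs, hx⟩
  · rw [Function.update_of_ne hkj.ne', Function.update_of_ne hkj.ne', sum_Ico_update_of_lt hkj]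
    exact h j hkj hjN

theorem mem_feasibleCosts_self [Nonempty U] :
    J ∈ feasibleCosts f ℓ Xt Ut Xf N N x ↔ x ∈ Xf ∧ J = 0 := by
  constructor
  · rintro ⟨s, xs, rfl, -, hterminal, rfl⟩
    exact ⟨hterminal, by simp⟩
  · rintro ⟨hx, rfl⟩
    exact ⟨fun _ => Classical.arbitrary U, fun _ => x, rfl,
      fun j hNj hjN => (hNj.not_gt hjN).elim, hx, by simp⟩

theorem mem_feasibleCosts_of_lt (hkN : k < N) :
    J ∈ feasibleCosts f ℓ Xt Ut Xf k N x ↔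
      (x, J) ∈ Xt ∧ ∃ u ∈ Ut, ∃ c ∈ feasibleCosts f ℓ Xt Ut Xf (k + 1) N (f x u), J = ℓ u + c := by
  constructor
  · rintro ⟨s, xs, rfl, hadm, hterminal, rfl⟩
    obtain ⟨hu, hstep, hXt⟩ := hadm k le_rfl hkN
    exact ⟨hXt, s k, hu, _, ⟨s, xs, hstep, hadm.tail, hterminal, rfl⟩,
      Finset.sum_eq_sum_Ico_succ_bot hkN _⟩
  · rintro ⟨hXt, u, hu, _, ⟨s, xs, hstart, hadm, hterminal, rfl⟩, rfl⟩
    refine ⟨Function.update s k u, Function.update xs k x, Function.update_self ..,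
      hadm.update hu hstart hXt, ?_, (sum_Ico_update_self hkN).symm⟩
    rwa [Function.update_of_ne hkN.ne']

theorem feasibleCosts_eq_slice [Nonempty U] {cs : ℕ → Set (X × G)}
    (hcsN : cs N = Xf ×ˢ {0}) (hkN : k ≤ N)
    (hcs : ∀ j, k ≤ j → j < N → cs j = costPredecessor f ℓ Xt Ut (cs (j + 1))) (x : X) :
    feasibleCosts f ℓ Xt Ut Xf k N x = {c | (x, c) ∈ cs k} := by
  induction hkN using Nat.decreasingInduction generalizing x with
  | self =>
    ext J
    rw [mem_feasibleCosts_self, hcsN]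
    rfl
  | of_succ k hkN ih =>
    ext J
    simp only [mem_feasibleCosts_of_lt hkN, ih fun j hkj => hcs j (Nat.le_of_succ_le hkj),
      hcs k le_rfl hkN]
    rfl

end Trajectories

theorem inter_preimage_add_eq_costPredecessor {E U G : Type*} [AddCommGroup E] [AddCommMonoid G]
    (A : E → E) (B : U → E) (d : E) (ℓ : U → G) (Xt : Set (E × G)) (Ut : Set U)
    (S : Set (E × G)) :
    Xt ∩ (fun p : E × G => (A p.1, p.2)) ⁻¹'
        (S + ((fun u => (-B u, ℓ u)) '' Ut + {(-d, (0 : G))})) =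
      costPredecessor (fun x u => A x + B u + d) ℓ Xt Ut S := by
  have isStep_iff (x y : E) (c c' : G) (u : U) :
      (y, c') + ((-B u, ℓ u) + (-d, 0)) = (A x, c) ↔ y = A x + B u + d ∧ c = ℓ u + c' := by
    rw [Prod.mk_add_mk, Prod.mk_add_mk, Prod.mk.injEq, add_zero, add_comm c', eq_comm (b := c),
      ← neg_add, ← sub_eq_add_neg, sub_eq_iff_eq_add, ← add_assoc]
  ext ⟨x, c⟩
  refine and_congr_right fun _ => ⟨?_, ?_⟩
  · rintro ⟨⟨y, c'⟩, hS, _, ⟨_, ⟨u, hu, rfl⟩, _, rfl, rfl⟩, heq⟩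
    obtain ⟨rfl, hcost⟩ := (isStep_iff x y c c' u).mp heq
    exact ⟨u, hu, c', hS, hcost⟩
  · rintro ⟨u, hu, c', hS, hcost⟩
    exact ⟨_, hS, _, ⟨_, ⟨u, hu, rfl⟩, _, rfl, rfl⟩, (isStep_iff x _ c c' u).mpr ⟨rfl, hcost⟩⟩

theorem isLeast_sInf_slice {X G : Type*} [TopologicalSpace X] [T1Space X]
    [ConditionallyCompleteLinearOrder G] [TopologicalSpace G] [ClosedIicTopology G]
    {S : Set (X × G)} (hS : IsCompact S) {x : X} (hx : ∃ c, (x, c) ∈ S) :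
    IsLeast {c | (x, c) ∈ S} (sInf {c | (x, c) ∈ S}) := by
  have slice_eq_image : {c | (x, c) ∈ S} = Prod.snd '' (S ∩ Prod.fst ⁻¹' {x}) := by
    ext c
    simp
  refine IsCompact.isLeast_sInf ?_ hx
  rw [slice_eq_image]
  exact (hS.inter_right (isClosed_singleton.preimage continuous_fst)).image continuous_snd

theorem isLeast_biUnion {ι α : Type*} [Preorder α] {K : Set ι} {S : ι → Set α} {c : ι → α}
    (hS : ∀ k ∈ K, IsLeast (S k) (c k)) {i : ι} (hi : i ∈ K) (hmin : ∀ k ∈ K, c i ≤ c k) :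
    IsLeast (⋃ k ∈ K, S k) (c i) := by
  refine ⟨Set.mem_biUnion hi (hS i hi).1, fun a ha => ?_⟩
  obtain ⟨k, hk, hak⟩ := Set.mem_iUnion₂.mp ha
  exact (hmin k hk).trans ((hS k hk).2 hak)

theorem optimal_horizon_general {X U G : Type*} [Nonempty U] [AddCommMonoid G] [LinearOrder G]
    {f : X → U → X} {ℓ : U → G} {Xt : Set (X × G)} {Ut : Set U} {Xf : Set X} {N : ℕ}
    {cs : ℕ → Set (X × G)} (hcsN : cs N = Xf ×ˢ {0})
    (hcs : ∀ k, 1 ≤ k → k < N → cs k = costPredecessor f ℓ Xt Ut (cs (k + 1)))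
    {x : X} {K : Set ℕ} (hK : K ⊆ Set.Icc 1 N) (hKne : K.Nonempty)
    {c : ℕ → G} (hc : ∀ k ∈ K, IsLeast {a | (x, a) ∈ cs k} (c k)) :
    (∀ k ∈ K, IsLeast (feasibleCosts f ℓ Xt Ut Xf k N x) (c k)) ∧
      ∃ kstar ∈ K, (∀ k ∈ K, c kstar ≤ c k) ∧
        IsLeast (⋃ k ∈ K, feasibleCosts f ℓ Xt Ut Xf k N x) (c kstar) := by
  have hcost : ∀ k ∈ K, IsLeast (feasibleCosts f ℓ Xt Ut Xf k N x) (c k) := fun k hk => by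
    rw [feasibleCosts_eq_slice hcsN (hK hk).2 fun j hkj => hcs j ((hK hk).1.trans hkj)]
    exact hc k hk
  obtain ⟨kstar, hkstar, hmin⟩ :=
    Set.exists_min_image K c ((Set.finite_Icc 1 N).subset hK) hKne
  exact ⟨hcost, kstar, hkstar, hmin, isLeast_biUnion hcost hkstar hmin⟩

/-- **Optimal horizon computation (Theorem 1).**
With compact cost-augmented controllable sets `cs k`, for every index `k` in
`K = {k ∈ {1,…,N} : ∃ c, (x_i, c) ∈ cs k}` the optimal `(N−k)`-step trajectory cost
`J_k` from `x_i` equals the least cost-to-go `c_k = min{c : (x_i, c) ∈ cs k}`; hence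
the globally optimal free-final-time cost `min_{k ∈ K} J_k` equals `c_{kstar}` for
`kstar = argmin_{k ∈ K} c_k`, achieved with horizon length `N − kstar`. -/
theorem optimal_horizon {n m N : ℕ}
    (A : Matrix (Fin n) (Fin n) ℝ) (hA : IsUnit A)
    (B : Matrix (Fin n) (Fin m) ℝ) (d : Fin n → ℝ)
    (ℓ : (Fin m → ℝ) →ₗ[ℝ] ℝ)
    (Xt : Set ((Fin n → ℝ) × ℝ)) (Ut : Set (Fin m → ℝ)) (Xf : Set (Fin n → ℝ))
    (cs : ℕ → Set ((Fin n → ℝ) × ℝ))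
    (hcsN : cs N = Xf ×ˢ ({0} : Set ℝ))
    (hcs : ∀ k, 1 ≤ k → k < N →
      cs k = Xt ∩ ((fun p : (Fin n → ℝ) × ℝ => (A.mulVec p.1, p.2)) ⁻¹'
        (cs (k + 1) +
          ((fun s => (-(B.mulVec s), ℓ s)) '' Ut +
            ({(-d, (0 : ℝ))} : Set ((Fin n → ℝ) × ℝ))))))
    (hcompact : ∀ k, 1 ≤ k → k ≤ N → IsCompact (cs k))
    (xi : Fin n → ℝ)
    (K : Set ℕ) (hK : K = {k | 1 ≤ k ∧ k ≤ N ∧ ∃ c : ℝ, (xi, c) ∈ cs k})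
    (hKne : K.Nonempty)
    (slice : ℕ → Set ℝ) (hslice : ∀ k, slice k = {c : ℝ | (xi, c) ∈ cs k})
    (cost : ℕ → Set ℝ)
    (hcost : ∀ k, cost k = {J : ℝ |
      ∃ (s : ℕ → Fin m → ℝ) (xs : ℕ → Fin n → ℝ),
        xs k = xi ∧
        (∀ j, k ≤ j → j < N →
          s j ∈ Ut ∧
          xs (j + 1) = A.mulVec (xs j) + B.mulVec (s j) + d ∧
          (xs j, ∑ i ∈ Finset.Ico j N, ℓ (s i)) ∈ Xt) ∧
        xs N ∈ Xf ∧
        J = ∑ i ∈ Finset.Ico k N, ℓ (s i)}) :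
    (∀ k ∈ K, sInf (cost k) = sInf (slice k)) ∧
    ∃ kstar ∈ K,
      (∀ k ∈ K, sInf (slice kstar) ≤ sInf (slice k)) ∧
      sInf (cost kstar) = sInf (slice kstar) ∧
      ∀ k ∈ K, sInf (cost kstar) ≤ sInf (cost k) := by
  obtain rfl := funext hslice
  obtain rfl := funext hcost
  subst hK
  obtain ⟨hleast, kstar, hkstar, hmin, -⟩ := optimal_horizon_general hcsN
    (fun k h1 hN => (hcs k h1 hN).trans (inter_preimage_add_eq_costPredecessor ..))
    (fun k hk => ⟨hk.1, hk.2.1⟩) hKne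
    (fun k hk => isLeast_sInf_slice (hcompact k hk.1 hk.2.1) hk.2.2)
  have hsInf := fun k hk => (hleast k hk).csInf_eq
  exact ⟨hsInf, kstar, hkstar, hmin, hsInf kstar hkstar, fun k hk =>
    (hsInf kstar hkstar).trans_le ((hmin k hk).trans_eq (hsInf k hk).symm)⟩
end

section
/- (Robust closed-loop guarantee of the robust controllable tube.) Let A be an invertible n×n real matrix, B an n×m real matrix, d ∈ ℝⁿ, X̃ ⊆ ℝⁿ, U ⊆ ℝᵐ, X_f ⊆ ℝⁿ, and disturbance sets W_1, …, W_N ⊆ ℝⁿ. Define the robust controllable sets by cs_N := X_f ⊖ W_N and cs_k := X̃ ∩ A⁻¹((cs_{k+1} ⊖ W_k) ⊕ ((−B)·U ⊕ (−d))) for k = N−1, …, 1. Then for every k ∈ {1, …, N} there exist policy maps π_j : ℝⁿ → ℝᵐ for j = k, …, N−1 with the following property: for every y_k ∈ cs_k and every disturbance sequence with w_j ∈ W_j for j = k, …, N, the closed-loop trajectory y_{j+1} = A y_j + B π_j(y_j) + d + w_j satisfies π_j(y_j) ∈ U and y_j ∈ cs_j for all j = k, …, N, and y_N + w_N ∈ X_f.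 That is, from any state in the robust controllable tube the state can be kept in the tube and driven into the terminal set for every admissible disturbance realization. -/
open Pointwise Matrix

/-!
A point `x` lies in `A⁻¹((C ⊖ W) ⊕ ((−B)·U ⊕ (−d)))` exactly when some single input `u ∈ U` sends
it into `C` whatever the disturbance in `W`: moving `−B u − d` to the other side turns membership
into `A x + B u + d ∈ C ⊖ W`. Choosing such a `u` for each `x` gives a feedback law from each
controllable set into the next one, and induction along the trajectory keeps the state in the tube.
-/

section RobustControl

variable {E F D : Type*}

/-- The Pontryagin difference `C ⊖ W`: the points which every disturbance in `W` leaves in `C`. -/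
def pontryaginDiff [Add E] (C W : Set E) : Set E :=
  {y | ∀ w ∈ W, y + w ∈ C}

/-- The robust predecessor set of `T` under `x⁺ = f x u w`: the states for which one admissible
input, chosen before the disturbance is known, leads into `T`. -/
def robustPre (f : E → F → D → E) (U : Set F) (W : Set D) (T : Set E) : Set E :=
  {x | ∃ u ∈ U, ∀ w ∈ W, f x u w ∈ T}

/-- The feedback law `κ` is admissible on `S` and steers `S` into `T` in one step of
`x⁺ = f x u w`, for every disturbance in `W`. It is a total function, unconstrained off `S`. -/
def IsRobustFeedback (f : E → F → D → E) (U : Set F) (W : Set D) (S T : Set E) (κ : E → F) : Prop :=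
  ∀ x ∈ S, κ x ∈ U ∧ ∀ w ∈ W, f x (κ x) w ∈ T

theorem IsRobustFeedback.mono_left {f : E → F → D → E} {U : Set F} {W : Set D} {S S' T : Set E}
    {κ : E → F} (hκ : IsRobustFeedback f U W S T κ) (hS : S' ⊆ S) :
    IsRobustFeedback f U W S' T κ :=
  fun x hx => hκ x (hS hx)

theorem exists_isRobustFeedback_robustPre [Nonempty F] (f : E → F → D → E) (U : Set F) (W : Set D)
    (T : Set E) : ∃ κ, IsRobustFeedback f U W (robustPre f U W T) T κ := by
  have pointwise : ∀ x ∈ robustPre f U W T, ∃ u, u ∈ U ∧ ∀ w ∈ W, f x u w ∈ T := fun _ hx => hx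
  choose! κ hκ using pointwise
  exact ⟨κ, hκ⟩

theorem mem_tube_of_isRobustFeedback {f : ℕ → E → F → D → E} {U : ℕ → Set F} {W : ℕ → Set D}
    {T : ℕ → Set E} {π : ℕ → E → F} {k N : ℕ}
    (hπ : ∀ j, k ≤ j → j < N → IsRobustFeedback (f j) (U j) (W j) (T j) (T (j + 1)) (π j))
    {w : ℕ → D} (hw : ∀ j, k ≤ j → j < N → w j ∈ W j)
    {y : ℕ → E} (hyk : y k ∈ T k)
    (hy : ∀ j, k ≤ j → j < N → y (j + 1) = f j (y j) (π j (y j)) (w j)) :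
    ∀ j, k ≤ j → j ≤ N → y j ∈ T j := by
  intro j hkj
  induction j, hkj using Nat.le_induction with
  | base => exact fun _ => hyk
  | succ j hkj ih =>
    intro hjN
    rw [hy j hkj hjN]
    exact (hπ j hkj hjN (y j) (ih (Nat.le_of_succ_le hjN))).2 (w j) (hw j hkj hjN)

variable [AddCommGroup E]

theorem preimage_pontryaginDiff_add_eq_robustPre (A : E → E) (B : F → E) (d : E) (U : Set F)
    (W C : Set E) :
    A ⁻¹' (pontryaginDiff C W + ((fun u => -B u) '' U + {-d})) =
      robustPre (fun x u w => A x + B u + d + w) U W C := by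
  ext x
  constructor
  · rintro ⟨z, hz, _, ⟨_, ⟨u, hu, rfl⟩, _, rfl, rfl⟩, hzx⟩
    change z + (-B u + -d) = A x at hzx
    have z_eq : z = A x + B u + d := by
      rw [← hzx]
      abel
    rw [z_eq] at hz
    exact ⟨u, hu, hz⟩
  · rintro ⟨u, hu, hx⟩
    refine ⟨A x + B u + d, hx, _, Set.add_mem_add (Set.mem_image_of_mem _ hu) rfl, ?_⟩
    change A x + B u + d + (-B u + -d) = A x
    abel

theorem robust_tube_closed_loop_guarantee_general [Nonempty F] {k₀ N : ℕ}
    (A : E → E) (B : F → E) (d : E) (X : Set E) (U : Set F) (Xf : Set E) (W cs : ℕ → Set E)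
    (hcsN : cs N = pontryaginDiff Xf (W N))
    (hcs : ∀ k, k₀ ≤ k → k < N →
      cs k = X ∩ A ⁻¹' (pontryaginDiff (cs (k + 1)) (W k) + ((fun u => -B u) '' U + {-d}))) :
    ∃ π : ℕ → E → F, ∀ k, k₀ ≤ k → k ≤ N →
      ∀ w : ℕ → E, (∀ j, k ≤ j → j ≤ N → w j ∈ W j) →
      ∀ y : ℕ → E, y k ∈ cs k →
        (∀ j, k ≤ j → j < N → y (j + 1) = A (y j) + B (π j (y j)) + d + w j) →
        (∀ j, k ≤ j → j < N → π j (y j) ∈ U) ∧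
        (∀ j, k ≤ j → j ≤ N → y j ∈ cs j) ∧
        y N + w N ∈ Xf := by
  let f : E → F → E → E := fun x u w => A x + B u + d + w
  choose π hπ using fun j => exists_isRobustFeedback_robustPre f U (W j) (cs (j + 1))
  have cs_subset : ∀ j, k₀ ≤ j → j < N → cs j ⊆ robustPre f U (W j) (cs (j + 1)) := by
    intro j hj hjN
    rw [hcs j hj hjN, preimage_pontryaginDiff_add_eq_robustPre]
    exact Set.inter_subset_right
  refine ⟨π, fun k hk hkN w hw y hyk hy => ?_⟩
  have feedback : ∀ j, k ≤ j → j < N → IsRobustFeedback f U (W j) (cs j) (cs (j + 1)) (π j) :=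
    fun j hkj hjN => (hπ j).mono_left (cs_subset j (hk.trans hkj) hjN)
  have tube : ∀ j, k ≤ j → j ≤ N → y j ∈ cs j :=
    mem_tube_of_isRobustFeedback feedback (fun j hkj hjN => hw j hkj hjN.le) hyk hy
  have terminal : y N ∈ pontryaginDiff Xf (W N) := hcsN ▸ tube N hkN le_rfl
  exact ⟨fun j hkj hjN => (feedback j hkj hjN (y j) (tube j hkj hjN.le)).1, tube,
    terminal (w N) (hw N hkN le_rfl)⟩

end RobustControl

/-- **Robust closed-loop guarantee of the robust controllable tube.**
With `cs N = X_f ⊖ W_N` and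
`cs k = X̃ ∩ A⁻¹((cs (k+1) ⊖ W_k) ⊕ ((−B)·U ⊕ (−d)))` for `1 ≤ k < N`, for every
`1 ≤ k ≤ N` there exist policy maps `π_j` such that, for every admissible disturbance
sequence `w_j ∈ W_j` and every closed-loop trajectory started at `y_k ∈ cs k` with
`y_{j+1} = A y_j + B π_j(y_j) + d + w_j`, the controls satisfy `π_j(y_j) ∈ U`, the
state remains in the tube (`y_j ∈ cs j` for `k ≤ j ≤ N`), and `y_N + w_N ∈ X_f`. -/
theorem robust_tube_closed_loop_guarantee {n m N : ℕ}
    (A : Matrix (Fin n) (Fin n) ℝ) (hA : IsUnit A)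
    (B : Matrix (Fin n) (Fin m) ℝ) (d : Fin n → ℝ)
    (X : Set (Fin n → ℝ)) (U : Set (Fin m → ℝ)) (Xf : Set (Fin n → ℝ))
    (W : ℕ → Set (Fin n → ℝ))
    (cs : ℕ → Set (Fin n → ℝ))
    (hcsN : cs N = {y : Fin n → ℝ | ∀ w ∈ W N, y + w ∈ Xf})
    (hcs : ∀ k, 1 ≤ k → k < N →
      cs k = X ∩ ((fun y => A.mulVec y) ⁻¹'
        ({y : Fin n → ℝ | ∀ w ∈ W k, y + w ∈ cs (k + 1)} +
          ((fun s => (-B).mulVec s) '' U + ({-d} : Set (Fin n → ℝ)))))) :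
    ∀ k, 1 ≤ k → k ≤ N →
      ∃ π : ℕ → (Fin n → ℝ) → (Fin m → ℝ),
        ∀ w : ℕ → Fin n → ℝ, (∀ j, k ≤ j → j ≤ N → w j ∈ W j) →
        ∀ y : ℕ → Fin n → ℝ, y k ∈ cs k →
          (∀ j, k ≤ j → j < N →
            y (j + 1) = A.mulVec (y j) + B.mulVec (π j (y j)) + d + w j) →
          (∀ j, k ≤ j → j < N → π j (y j) ∈ U) ∧
          (∀ j, k ≤ j → j ≤ N → y j ∈ cs j) ∧
          y N + w N ∈ Xf := by
  simp only [neg_mulVec] at hcs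
  obtain ⟨π, hπ⟩ :=
    robust_tube_closed_loop_guarantee_general A.mulVec B.mulVec d X U Xf W cs hcsN hcs
  exact fun k hk hkN => ⟨π, hπ k hk hkN⟩
end
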